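/- Assume that L is neither bounded from above nor from below, that for all a, b ∈ ℝ one has Λ([0, x+a]) − Λ([−x+b, 0]) = O(x/log²x) as x → ∞, and define S_Λ(z) = lim_{c→∞} Σ_{λ ∈ L ∩ [−c,c]} γ_λ/(λ − z) for z ∈ ℂ∖L. Then for every h ∈ ℝ, the set S_Λ^{−1}(h) = {z ∈ ℂ∖L : S_Λ(z) = h} is contained in ℝ and interlaces with L: it contains exactly one point in each open interval between two consecutive points of L. -/

import Mathlib

open Filter Set Asymptotics Topology

/-!
For real `t` each term `γ l / (l - t)` is strictly increasing off its pole. Increments of the series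
between two points of a gap therefore have terms of one sign, so they converge unconditionally
even though the series itself need not, and on a compact subinterval `[p, q]` they are dominated
termwise by the increment from `p` to `q`: the Weierstrass M-test makes the sum continuous. Keeping
only the increment of one polar term shows that the sum tends to `-∞` and `+∞` at the ends of a gap.
Off the real line, the imaginary part of every term has the sign of `Im z`.
-/

section ConditionalSums

variable {ι : Type*} {𝓢 : SummationFilter ι} [𝓢.NeBot]

lemma ofReal_re_eq_of_hasSum_ofReal {f : ι → ℝ} {w : ℂ} (h : HasSum (fun i => (f i : ℂ)) w 𝓢) :
    (w.re : ℂ) = w :=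
  h.unique (Complex.hasSum_ofReal.2 (Complex.hasSum_re h)) |>.symm

variable [𝓢.LeAtTop]

lemma hasSum_unconditional_of_nonneg {f : ι → ℝ} {a : ℝ} (hf : ∀ i, 0 ≤ f i)
    (h : HasSum f a 𝓢) : HasSum f a := by
  have hsum : Summable f :=
    summable_of_sum_le hf fun s => sum_le_hasSum s (fun i _ => hf i) h
  have hlim : HasSum f (∑' i, f i) 𝓢 := hsum.hasSum.mono_left 𝓢.le_atTop
  exact h.unique hlim ▸ hsum.hasSum

section OrderedGroup

variable {E : Type*} [AddCommGroup E] [PartialOrder E] [IsOrderedAddMonoid E] [TopologicalSpace E]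
  [IsTopologicalAddGroup E] [OrderClosedTopology E]

lemma sub_le_sub_of_hasSum {f g : ι → E} {a b : E} (hfg : f ≤ g) (hf : HasSum f a 𝓢)
    (hg : HasSum g b 𝓢) (i : ι) : g i - f i ≤ b - a :=
  le_hasSum (hg.sub hf) i fun j _ => sub_nonneg.2 (hfg j)

lemma strictMonoOn_of_hasSum {α : Type*} [Preorder α] {s : Set α} {f : ι → α → E} {R : α → E}
    (hmono : ∀ i, MonotoneOn (f i) s) {j : ι} (hj : StrictMonoOn (f j) s)
    (hR : ∀ t ∈ s, HasSum (f · t) (R t) 𝓢) : StrictMonoOn R s := fun x hx y hy hxy =>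
  hasSum_lt (fun i => hmono i hx hy hxy.le) (hj hx hy hxy) (hR x hx) (hR y hy)

end OrderedGroup

lemma continuousOn_Icc_of_hasSum_monotone {α : Type*} [Preorder α] [TopologicalSpace α]
    {f : ι → α → ℝ} {R : α → ℝ} {p q : α} (hpq : p ≤ q)
    (hmono : ∀ i, MonotoneOn (f i) (Icc p q)) (hcont : ∀ i, ContinuousOn (f i) (Icc p q))
    (hR : ∀ t ∈ Icc p q, HasSum (f · t) (R t) 𝓢) : ContinuousOn R (Icc p q) := by
  have hp : p ∈ Icc p q := left_mem_Icc.2 hpq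
  have hq : q ∈ Icc p q := right_mem_Icc.2 hpq
  have hnonneg : ∀ t ∈ Icc p q, ∀ i, 0 ≤ f i t - f i p := fun t ht i =>
    sub_nonneg.2 (hmono i hp ht ht.1)
  have hincr : ∀ t ∈ Icc p q, HasSum (fun i => f i t - f i p) (R t - R p) := fun t ht =>
    hasSum_unconditional_of_nonneg (hnonneg t ht) ((hR t ht).sub (hR p hp))
  have htsum : ContinuousOn (fun t => ∑' i, (f i t - f i p)) (Icc p q) := by
    refine continuousOn_tsum (fun i => (hcont i).sub continuousOn_const) (hincr q hq).summable
      fun i t ht => ?_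
    rw [Real.norm_of_nonneg (hnonneg t ht i)]
    exact sub_le_sub_right (hmono i ht hq ht.2) _
  refine (htsum.add_const (R p)).congr fun t ht => ?_
  simp only [(hincr t ht).tsum_eq, sub_add_cancel]

lemma continuousOn_Ioo_of_hasSum_monotone {α : Type*} [LinearOrder α] [DenselyOrdered α]
    [TopologicalSpace α] [OrderTopology α] {f : ι → α → ℝ} {R : α → ℝ} {u v : α}
    (hmono : ∀ i, MonotoneOn (f i) (Ioo u v)) (hcont : ∀ i, ContinuousOn (f i) (Ioo u v))
    (hR : ∀ t ∈ Ioo u v, HasSum (f · t) (R t) 𝓢) : ContinuousOn R (Ioo u v) := by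
  intro t ht
  obtain ⟨p, hup, hpt⟩ := exists_between ht.1
  obtain ⟨q, htq, hqv⟩ := exists_between ht.2
  have hsub : Icc p q ⊆ Ioo u v := Icc_subset_Ioo hup hqv
  have hIcc : ContinuousOn R (Icc p q) :=
    continuousOn_Icc_of_hasSum_monotone (hpt.trans htq).le (fun i => (hmono i).mono hsub)
      (fun i => (hcont i).mono hsub) fun t ht => hR t (hsub ht)
  exact (hIcc.continuousAt (Icc_mem_nhds hpt htq)).continuousWithinAt

lemma tendsto_atTop_of_hasSum {α : Type*} {l : Filter α} {f : ι → α → ℝ} {R : α → ℝ}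
    {g : ι → ℝ} {a : ℝ} (hg : HasSum g a 𝓢) (hR : ∀ᶠ t in l, HasSum (f · t) (R t) 𝓢)
    (hgf : ∀ᶠ t in l, ∀ i, g i ≤ f i t) {k : ι} (hk : Tendsto (f k) l atTop) :
    Tendsto R l atTop := by
  refine tendsto_atTop_mono' l ?_ (tendsto_atTop_add_const_right l (a - g k) hk)
  filter_upwards [hR, hgf] with t hRt hgft
  have := sub_le_sub_of_hasSum hgft hg hRt k
  linarith

lemma tendsto_atBot_of_hasSum {α : Type*} {l : Filter α} {f : ι → α → ℝ} {R : α → ℝ}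
    {g : ι → ℝ} {a : ℝ} (hg : HasSum g a 𝓢) (hR : ∀ᶠ t in l, HasSum (f · t) (R t) 𝓢)
    (hfg : ∀ᶠ t in l, ∀ i, f i t ≤ g i) {k : ι} (hk : Tendsto (f k) l atBot) :
    Tendsto R l atBot := by
  rw [← tendsto_neg_atTop_iff] at hk ⊢
  exact tendsto_atTop_of_hasSum (f := fun i t => -f i t) hg.neg (hR.mono fun t ht => ht.neg)
    (hfg.mono fun t ht i => neg_le_neg (ht i)) hk

lemma bijOn_Ioo_of_hasSum {α : Type*} [ConditionallyCompleteLinearOrder α] [DenselyOrdered α]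
    [TopologicalSpace α] [OrderTopology α] {f : ι → α → ℝ} {R : α → ℝ} {u v : α} (huv : u < v)
    (hmono : ∀ i, MonotoneOn (f i) (Ioo u v)) (hcont : ∀ i, ContinuousOn (f i) (Ioo u v))
    {i₀ j k : ι} (hstrict : StrictMonoOn (f i₀) (Ioo u v))
    (hj : Tendsto (f j) (𝓝[>] u) atBot) (hk : Tendsto (f k) (𝓝[<] v) atTop)
    (hR : ∀ t ∈ Ioo u v, HasSum (f · t) (R t) 𝓢) : BijOn R (Ioo u v) univ := by
  obtain ⟨m, hm⟩ := nonempty_Ioo.2 huv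
  have hbot : Tendsto R (𝓝[>] u) atBot := by
    refine tendsto_atBot_of_hasSum (hR m hm) ?_ ?_ hj
    · filter_upwards [Ioo_mem_nhdsGT huv] using hR
    · filter_upwards [Ioo_mem_nhdsGT hm.1] with t ht i
      exact hmono i ⟨ht.1, ht.2.trans hm.2⟩ hm ht.2.le
  have htop : Tendsto R (𝓝[<] v) atTop := by
    refine tendsto_atTop_of_hasSum (hR m hm) ?_ ?_ hk
    · filter_upwards [Ioo_mem_nhdsLT huv] using hR
    · filter_upwards [Ioo_mem_nhdsLT hm.2] with t ht i
      exact hmono i hm ⟨hm.1.trans ht.1, ht.2⟩ ht.1.le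
  exact ⟨mapsTo_univ _ _, (strictMonoOn_of_hasSum hmono hstrict hR).injOn,
    (continuousOn_Ioo_of_hasSum_monotone hmono hcont hR).surjOn_of_tendsto ⟨m, hm⟩
      ((tendsto_comp_coe_Ioo_atBot huv).2 hbot) ((tendsto_comp_coe_Ioo_atTop huv).2 htop)⟩

end ConditionalSums

section CauchyKernel

lemma strictMonoOn_div_sub {𝕜 : Type*} [Field 𝕜] [LinearOrder 𝕜] [IsStrictOrderedRing 𝕜]
    {g a : 𝕜} {s : Set 𝕜} [hs : s.OrdConnected] (hg : 0 < g) (ha : a ∉ s) :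
    StrictMonoOn (fun t => g / (a - t)) s := by
  intro x hx y hy hxy
  rcases lt_or_ge a x with hax | hxa
  · simp only [div_eq_mul_inv]
    exact mul_lt_mul_of_pos_left ((inv_lt_inv_of_neg (sub_neg.2 hax)
      (sub_neg.2 (hax.trans hxy))).2 (sub_lt_sub_left hxy a)) hg
  · have hya : y < a := not_le.1 fun hay => ha (hs.out hx hy ⟨hxa, hay⟩)
    exact div_lt_div_of_pos_left hg (sub_pos.2 hya) (sub_lt_sub_left hxy a)

lemma continuousOn_div_sub {𝕜 : Type*} [DivisionRing 𝕜] [TopologicalSpace 𝕜] [IsTopologicalRing 𝕜]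
    [ContinuousInv₀ 𝕜] {g a : 𝕜} {s : Set 𝕜} (ha : a ∉ s) :
    ContinuousOn (fun t => g / (a - t)) s :=
  continuousOn_const.div (continuousOn_const.sub continuousOn_id) fun _ ht =>
    sub_ne_zero.2 (ne_of_mem_of_not_mem ht ha).symm

section Poles

variable {𝕜 : Type*} [Field 𝕜] [LinearOrder 𝕜] [IsStrictOrderedRing 𝕜] [TopologicalSpace 𝕜]
  [OrderTopology 𝕜] {g : 𝕜}

lemma tendsto_div_sub_nhdsLT (hg : 0 < g) (a : 𝕜) :
    Tendsto (fun t => g / (a - t)) (𝓝[<] a) atTop := by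
  have hlim : Tendsto (fun t => a - t) (𝓝[<] a) (𝓝 0) :=
    tendsto_nhdsWithin_of_tendsto_nhds ((continuous_sub_left a).tendsto' a 0 (sub_self a))
  have hsub : Tendsto (fun t => a - t) (𝓝[<] a) (𝓝[>] 0) :=
    tendsto_nhdsWithin_iff.2 ⟨hlim, eventually_mem_nhdsWithin.mono fun _ => sub_pos.2⟩
  simpa only [div_eq_mul_inv, Function.comp_def] using
    (tendsto_inv_nhdsGT_zero.comp hsub).const_mul_atTop hg

lemma tendsto_div_sub_nhdsGT (hg : 0 < g) (a : 𝕜) :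
    Tendsto (fun t => g / (a - t)) (𝓝[>] a) atBot := by
  have hlim : Tendsto (fun t => a - t) (𝓝[>] a) (𝓝 0) :=
    tendsto_nhdsWithin_of_tendsto_nhds ((continuous_sub_left a).tendsto' a 0 (sub_self a))
  have hsub : Tendsto (fun t => a - t) (𝓝[>] a) (𝓝[<] 0) :=
    tendsto_nhdsWithin_iff.2 ⟨hlim, eventually_mem_nhdsWithin.mono fun _ => sub_neg.2⟩
  simpa only [div_eq_mul_inv, Function.comp_def] using
    (tendsto_inv_nhdsLT_zero.comp hsub).const_mul_atBot hg

end Poles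

lemma im_div_sub_mul_im_pos {g a : ℝ} {z : ℂ} (hg : 0 < g) (hz : z.im ≠ 0) :
    0 < ((g : ℂ) / (a - z)).im * z.im := by
  have hne : (a : ℂ) - z ≠ 0 := fun h => hz (by simp [← sub_eq_zero.1 h])
  have hformula : ((g : ℂ) / (a - z)).im * z.im = g * z.im ^ 2 / Complex.normSq (a - z) := by
    simp only [Complex.div_im, Complex.ofReal_im, Complex.sub_re, Complex.ofReal_re, zero_mul,
      zero_div, Complex.sub_im, zero_sub, mul_neg, neg_mul]
    ring
  rw [hformula]
  exact div_pos (mul_pos hg (sq_pos_of_ne_zero hz)) (Complex.normSq_pos.2 hne)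

end CauchyKernel

section StieltjesSeries

variable {ι : Type*} {𝓢 : SummationFilter ι} [𝓢.LeAtTop] [𝓢.NeBot] {γ x : ι → ℝ}

lemma im_mul_im_pos_of_hasSum_div_sub [Nonempty ι] (hγ : ∀ i, 0 < γ i) {z w : ℂ}
    (hz : z.im ≠ 0) (hw : HasSum (fun i => (γ i : ℂ) / (x i - z)) w 𝓢) : 0 < w.im * z.im := by
  have him : HasSum (fun i => ((γ i : ℂ) / (x i - z)).im * z.im) (w.im * z.im) 𝓢 :=
    (Complex.hasSum_im hw).mul_right z.im
  have hpos : ∀ i, 0 < ((γ i : ℂ) / (x i - z)).im * z.im := fun i =>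
    im_div_sub_mul_im_pos (hγ i) hz
  exact hasSum_lt (fun i => (hpos i).le) (hpos (Classical.arbitrary ι)) hasSum_zero him

lemma bijOn_Ioo_of_hasSum_div_sub (hγ : ∀ i, 0 < γ i) {j k : ι} (hjk : x j < x k)
    (hgap : ∀ i, x i ∉ Ioo (x j) (x k)) {R : ℝ → ℝ}
    (hR : ∀ t ∈ Ioo (x j) (x k), HasSum (fun i => γ i / (x i - t)) (R t) 𝓢) :
    BijOn R (Ioo (x j) (x k)) univ :=
  bijOn_Ioo_of_hasSum (f := fun i t => γ i / (x i - t)) hjk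
    (fun i => (strictMonoOn_div_sub (hγ i) (hgap i)).monotoneOn)
    (fun i => continuousOn_div_sub (hgap i)) (strictMonoOn_div_sub (hγ j) (hgap j))
    (tendsto_div_sub_nhdsGT (hγ j) (x j)) (tendsto_div_sub_nhdsLT (hγ k) (x k)) hR

end StieltjesSeries

section SymmetricTruncation

variable {L : Set ℝ}

/-- Principal-value summation over a set `L` of reals: sums over `L ∩ [-c, c]`, with `c → ∞`. As
every `L ∩ [-c, c]` is finite, this is a summation filter on the subtype `L`. -/
noncomputable def symmetricTruncation (L : Set ℝ) (hL : ∀ c, (L ∩ Icc (-c) c).Finite) :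
    SummationFilter L where
  filter := atTop.map fun c => (hL c).toFinset.preimage (↑) Subtype.val_injective.injOn

variable {hL : ∀ c, (L ∩ Icc (-c) c).Finite}

instance : (symmetricTruncation L hL).NeBot where
  ne_bot := map_neBot

instance : (symmetricTruncation L hL).LeAtTop where
  le_atTop := by
    refine tendsto_atTop_finset_of_monotone (fun c d hcd l hl => ?_) fun l => ⟨|(l : ℝ)|, ?_⟩
    · simp only [Finset.mem_preimage, Set.Finite.mem_toFinset] at hl ⊢
      exact ⟨hl.1, Icc_subset_Icc (neg_le_neg hcd) hcd hl.2⟩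
    · simpa only [Finset.mem_preimage, Set.Finite.mem_toFinset] using ⟨l.2, abs_le.1 le_rfl⟩

lemma hasSum_symmetricTruncation_iff {M : Type*} [AddCommMonoid M] [TopologicalSpace M]
    {f : ℝ → M} {a : M} :
    HasSum (fun l : L => f l) a (symmetricTruncation L hL) ↔
      Tendsto (fun c => ∑' l : ↥(L ∩ Icc (-c) c), f l) atTop (𝓝 a) := by
  rw [HasSum, symmetricTruncation, tendsto_map'_iff]
  refine tendsto_congr fun c => ?_
  have htsum : ∑' l : ↥(L ∩ Icc (-c) c), f l = ∑ l ∈ (hL c).toFinset, f l := by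
    rw [← Finset.tsum_subtype', (hL c).coe_toFinset]
  rw [htsum, Function.comp_apply]
  refine Finset.sum_preimage _ _ _ f fun l hl hlL => ?_
  exact absurd ⟨⟨l, ((hL c).mem_toFinset.1 hl).1⟩, rfl⟩ hlL

end SymmetricTruncation

theorem stieltjes_level_set_interlaces_general (L : Set ℝ) (γ : ℝ → ℝ) (hL : L.Nonempty)
    (hγpos : ∀ l ∈ L, 0 < γ l) (𝓢 : SummationFilter L) [𝓢.LeAtTop] [𝓢.NeBot] (S : ℂ → ℂ)
    (hS : ∀ z : ℂ, (∀ l ∈ L, z ≠ (l : ℂ)) →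
      HasSum (fun l : L => (γ l : ℂ) / (((l : ℝ) : ℂ) - z)) (S z) 𝓢) (h : ℝ) :
    (∀ z : ℂ, (∀ l ∈ L, z ≠ (l : ℂ)) → S z = (h : ℂ) → z.im = 0)
    ∧ ∀ lam₁ lam₂ : ℝ, lam₁ ∈ L → lam₂ ∈ L → lam₁ < lam₂ → L ∩ Ioo lam₁ lam₂ = ∅ →
        ∃! t : ℝ, t ∈ Ioo lam₁ lam₂ ∧ S (t : ℂ) = (h : ℂ) := by
  have hγ : ∀ l : L, 0 < γ l := fun l => hγpos l l.2
  have : Nonempty L := hL.to_subtype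
  refine ⟨fun z hzL hz => ?_, fun u v hu hv huv hgap => ?_⟩
  · by_contra hzim
    simpa [hz] using im_mul_im_pos_of_hasSum_div_sub hγ hzim (hS z hzL)
  have hgap' : ∀ l : L, (l : ℝ) ∉ Ioo u v := fun l hl => hgap.subset ⟨l.2, hl⟩
  have hSt : ∀ t ∈ Ioo u v,
      HasSum (fun l : L => ((γ l / (l - t) : ℝ) : ℂ)) (S t) 𝓢 := fun t ht => by
    simpa only [Complex.ofReal_div, Complex.ofReal_sub] using
      hS t fun l hl heq => hgap' ⟨l, hl⟩ (Complex.ofReal_injective heq ▸ ht)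
  have hbij : BijOn (fun t : ℝ => (S t).re) (Ioo u v) univ :=
    bijOn_Ioo_of_hasSum_div_sub (x := ((↑) : L → ℝ)) (j := ⟨u, hu⟩) (k := ⟨v, hv⟩) hγ huv hgap'
      fun t ht => Complex.hasSum_re (hSt t ht)
  obtain ⟨t, ht, hth⟩ := hbij.surjOn (mem_univ h)
  refine ⟨t, ⟨ht, ?_⟩, fun s hs => hbij.injOn hs.1 ht ?_⟩
  · rw [← ofReal_re_eq_of_hasSum_ofReal (hSt t ht)]
    exact congrArg _ hth
  · simp [hs.2, hth]

/-- For every `h ∈ ℝ`, the level set `S_Λ^{-1}(h)` is contained in `ℝ` and interlaces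
with `L`: there is exactly one solution in each open interval between two consecutive
points of `L`. -/
theorem stieltjes_level_set_interlaces
    (L : Set ℝ) (γ : ℝ → ℝ)
    (hLfin : ∀ a b : ℝ, (L ∩ Set.Icc a b).Finite)
    (hub : ¬ BddAbove L) (hlb : ¬ BddBelow L)
    (hγpos : ∀ l ∈ L, 0 < γ l)
    (hgrowth : ∀ a b : ℝ,
      (fun x : ℝ => (∑' l : ↥(L ∩ Set.Icc 0 (x + a)), γ (l : ℝ))
          - (∑' l : ↥(L ∩ Set.Icc (-x + b) 0), γ (l : ℝ)))
        =O[atTop] (fun x : ℝ => x / (Real.log x) ^ 2))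
    (S : ℂ → ℂ)
    (hS : ∀ z : ℂ, (∀ l ∈ L, z ≠ (l : ℂ)) →
      Tendsto
        (fun c : ℝ => ∑' l : ↥(L ∩ Set.Icc (-c) c),
          ((γ (l : ℝ) : ℂ) / (((l : ℝ) : ℂ) - z)))
        atTop (𝓝 (S z))) :
    ∀ h : ℝ,
      (∀ z : ℂ, (∀ l ∈ L, z ≠ (l : ℂ)) → S z = (h : ℂ) → z.im = 0)
      ∧ ∀ lam₁ lam₂ : ℝ, lam₁ ∈ L → lam₂ ∈ L → lam₁ < lam₂ →
          L ∩ Set.Ioo lam₁ lam₂ = ∅ →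
          ∃! t : ℝ, t ∈ Set.Ioo lam₁ lam₂ ∧ S (t : ℂ) = (h : ℂ) := by
  exact stieltjes_level_set_interlaces_general L γ (nonempty_of_not_bddAbove hub) hγpos
    (symmetricTruncation L fun c => hLfin (-c) c) S fun z hz =>
      (hasSum_symmetricTruncation_iff (f := fun l => (γ l : ℂ) / (l - z))).2 (hS z hz)
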